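/- arXiv:1611.09814 — 3 statements merged into one kernel-verified Lean document; each statement's English description precedes it below -/
import Mathlib

section
/- Let P be a symmetric positive definite n×n real matrix, let Y = P⁻¹, let A be an n×n real matrix, B an n×m real matrix, K an m×n real matrix, and set K_a = K Y. Then (A + BK)ᵀ P + P (A + BK) is negative definite if and only if A Y + Y Aᵀ + B K_a + K_aᵀ Bᵀ is negative definite. -/
/-!
Since `P` is positive definite it is invertible, and `Y = P⁻¹` is symmetric. Multiplying the first
matrix by `Y` on both sides gives exactly the second one, as `P * Y = Y * P = 1` and `K * Y = Ka`.
Congruence by an invertible matrix preserves negative definiteness (`negDef_congr`), and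
congruence by `P` is the inverse operation.
-/

open Matrix

/-- Negative definiteness is preserved by the congruence `M ↦ Sᵀ * M * S` when `S` is injective,
here witnessed by a left inverse `T`. -/
lemma negDef_congr {n : ℕ} {M S T : Matrix (Fin n) (Fin n) ℝ} (hTS : T * S = 1)
    (hM : ∀ v : Fin n → ℝ, v ≠ 0 → v ⬝ᵥ M.mulVec v < 0) :
    ∀ v : Fin n → ℝ, v ≠ 0 → v ⬝ᵥ (Sᵀ * M * S).mulVec v < 0 := by
  intro v hv
  have hSv : S.mulVec v ≠ 0 := by
    intro h
    apply hv
    rw [← one_mulVec v, ← hTS, ← mulVec_mulVec, h, mulVec_zero]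
  have h := hM _ hSv
  rwa [← vecMul_transpose, ← dotProduct_mulVec, vecMul_transpose, mulVec_mulVec, mulVec_mulVec] at h

/-- Paper's Theorem 5: the BMI `(A + BK)ᵀ P + P (A + BK) < 0` is equivalent, via
congruence by `Y = P⁻¹` and the substitution `K_a = K Y`, to the LMI
`A Y + Y Aᵀ + B K_a + K_aᵀ Bᵀ < 0`. -/
theorem bmi_iff_lmi {n m : ℕ}
    (P : Matrix (Fin n) (Fin n) ℝ)
    (hPsymm : Pᵀ = P)
    (hPpos : ∀ v : Fin n → ℝ, v ≠ 0 → 0 < v ⬝ᵥ P.mulVec v)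
    (A : Matrix (Fin n) (Fin n) ℝ) (B : Matrix (Fin n) (Fin m) ℝ)
    (K : Matrix (Fin m) (Fin n) ℝ)
    (Y : Matrix (Fin n) (Fin n) ℝ) (hY : Y = P⁻¹)
    (Ka : Matrix (Fin m) (Fin n) ℝ) (hKa : Ka = K * Y) :
    (∀ v : Fin n → ℝ, v ≠ 0 →
        v ⬝ᵥ ((A + B * K)ᵀ * P + P * (A + B * K)).mulVec v < 0) ↔
    (∀ v : Fin n → ℝ, v ≠ 0 →
        v ⬝ᵥ (A * Y + Y * Aᵀ + B * Ka + Kaᵀ * Bᵀ).mulVec v < 0) := by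
  have hunit : IsUnit P := by
    refine mulVec_injective_iff_isUnit.1 ((injective_iff_map_eq_zero P.mulVecLin).2 ?_)
    intro v hv
    by_contra hne
    have h := hPpos v hne
    rw [mulVecLin_apply] at hv
    simp [hv] at h
  have hdet : IsUnit P.det := (isUnit_iff_isUnit_det P).1 hunit
  have hPY : P * Y = 1 := by rw [hY, mul_nonsing_inv P hdet]
  have hYP : Y * P = 1 := by rw [hY, nonsing_inv_mul P hdet]
  have hYsymm : Yᵀ = Y := by rw [hY, transpose_nonsing_inv, hPsymm]
  have hLMI : A * Y + Y * Aᵀ + B * Ka + Kaᵀ * Bᵀ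
      = Yᵀ * ((A + B * K)ᵀ * P + P * (A + B * K)) * Y := by
    have e : Y * ((A + B * K)ᵀ * P + P * (A + B * K)) * Y
        = Y * (A + B * K)ᵀ * (P * Y) + (Y * P) * ((A + B * K) * Y) := by
      noncomm_ring
    rw [hYsymm, e, hPY, hYP, hKa]
    simp only [transpose_add, transpose_mul, hYsymm, Matrix.mul_add, Matrix.add_mul,
      Matrix.mul_one, Matrix.one_mul, Matrix.mul_assoc]
    abel
  rw [hLMI]
  refine ⟨negDef_congr hPY, fun h => ?_⟩
  -- Congruence by `P` undoes congruence by `Y`.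
  have hback : ∀ M : Matrix (Fin n) (Fin n) ℝ, Pᵀ * (Yᵀ * M * Y) * P = M := by
    intro M
    have e : P * (Y * M * Y) * P = (P * Y) * M * (Y * P) := by noncomm_ring
    rw [hPsymm, hYsymm, e, hPY, hYP, Matrix.one_mul, Matrix.mul_one]
  have h' := negDef_congr hYP h
  rwa [hback] at h'
end

section
/- Let P be a symmetric positive definite n×n real matrix, B an n×m real matrix, K an m×n real matrix, and A₁, …, A_N n×n real matrices such that (Aᵢ + BK)ᵀ P + P (Aᵢ + BK) is negative definite for every i ∈ {1, …, N}. Let A : ℝ → (n×n real matrices) be any function such that A(t) belongs to the convex hull of {A₁, …, A_N} for every t ≥ 0, and let x : ℝ → ℝⁿ satisfy, for every t ≥ 0, x′(t) = (A(t) + BK) x(t). Then x(t) → 0 as t → +∞. -/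
open Matrix

/-!
The quadratic function `V v = vᵀ P v` is a strict Lyapunov function, uniformly over the polytope.
By compactness of the unit sphere (`exists_pos_mul_le`) each vertex `Aᵢ` admits a rate `aᵢ > 0`
with `aᵢ V v ≤ -vᵀ ((Aᵢ + BK)ᵀ P + P (Aᵢ + BK)) v`; since there are finitely many vertices, one rate
`a` serves them all, and since the right-hand side is affine in the matrix, the inequality extends
to the convex hull. Along a solution `V' = xᵀ ((A(t) + BK)ᵀ P + P (A(t) + BK)) x ≤ -a V`, so
`exp (a t) V (x t)` is nonincreasing and `V (x t) → 0` exponentially. Finally `V` dominates a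
positive multiple of `‖x‖²`, whence `x t → 0`. No regularity of `t ↦ A(t)` is needed.
-/

/-- Comparison of continuous functions homogeneous of degree two: a positive one dominates a
positive multiple of any other, because the quotient is bounded on the unit sphere. -/
lemma exists_pos_mul_le {n : ℕ} (p q : (Fin n → ℝ) → ℝ) (hp : Continuous p) (hq : Continuous q)
    (hp2 : ∀ (r : ℝ) v, p (r • v) = r ^ 2 * p v) (hq2 : ∀ (r : ℝ) v, q (r • v) = r ^ 2 * q v)
    (hpos : ∀ v, v ≠ 0 → 0 < q v) : ∃ a > 0, ∀ v, a * p v ≤ q v := by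
  have hS : ∀ v ∈ Metric.sphere (0 : Fin n → ℝ) 1, v ≠ 0 := by
    rintro v hv rfl
    simp at hv
  obtain ⟨D, hD⟩ := (isCompact_sphere (0 : Fin n → ℝ) 1).bddAbove_image
    (f := fun v => p v / q v)
    (hp.continuousOn.div hq.continuousOn fun v hv => (hpos v (hS v hv)).ne')
  have hD1 : 0 < |D| + 1 := by positivity
  refine ⟨(|D| + 1)⁻¹, inv_pos.2 hD1, fun v => ?_⟩
  rw [inv_mul_le_iff₀ hD1]
  by_cases hv : v = 0
  · have h1 := hp2 0 v
    have h2 := hq2 0 v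
    rw [zero_smul, zero_pow two_ne_zero, zero_mul] at h1 h2
    rw [hv, h1, h2, mul_zero]
  · have hn : 0 < ‖v‖ := norm_pos_iff.2 hv
    have hu : ‖v‖⁻¹ • v ∈ Metric.sphere (0 : Fin n → ℝ) 1 := by
      simp [norm_smul, hn.ne']
    have h := hD (Set.mem_image_of_mem _ hu)
    simp only [hp2, hq2] at h
    rw [mul_div_mul_left _ _ (by positivity), div_le_iff₀ (hpos v hv)] at h
    nlinarith [hpos v hv, le_abs_self D]

lemma continuous_quad {n : ℕ} (M : Matrix (Fin n) (Fin n) ℝ) :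
    Continuous fun v : Fin n → ℝ => v ⬝ᵥ M.mulVec v := by
  fun_prop

lemma quad_smul {n : ℕ} (M : Matrix (Fin n) (Fin n) ℝ) (r : ℝ) (v : Fin n → ℝ) :
    (r • v) ⬝ᵥ M.mulVec (r • v) = r ^ 2 * (v ⬝ᵥ M.mulVec v) := by
  simp [mulVec_smul]
  ring

/-- The Lyapunov form of `F` is the derivative of `vᵀ P v` in the direction `F v`. -/
lemma quad_lyapunov {n : ℕ} (P F : Matrix (Fin n) (Fin n) ℝ) (v : Fin n → ℝ) :
    v ⬝ᵥ (Fᵀ * P + P * F).mulVec v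
      = F.mulVec v ⬝ᵥ P.mulVec v + v ⬝ᵥ P.mulVec (F.mulVec v) := by
  rw [add_mulVec, dotProduct_add, ← mulVec_mulVec, ← mulVec_mulVec, dotProduct_mulVec v Fᵀ,
    vecMul_transpose]

lemma hasDerivAt_quad {n : ℕ} (P : Matrix (Fin n) (Fin n) ℝ) {x : ℝ → Fin n → ℝ}
    {x' : Fin n → ℝ} {t : ℝ} (hx : HasDerivAt x x' t) :
    HasDerivAt (fun s => x s ⬝ᵥ P.mulVec (x s)) (x' ⬝ᵥ P.mulVec (x t) + x t ⬝ᵥ P.mulVec x') t := by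
  have hc := hasDerivAt_pi.1 hx
  simp only [dotProduct, mulVec, ← Finset.sum_add_distrib]
  exact HasDerivAt.fun_sum fun i _ =>
    (hc i).mul (HasDerivAt.fun_sum fun j _ => (hc j).const_mul (P i j))

/-- At a fixed `v`, the Lyapunov form is affine in the matrix, so an upper bound valid at all vertices
holds on their convex hull. -/
lemma rate_of_mem_convexHull {n N : ℕ} (P L : Matrix (Fin n) (Fin n) ℝ)
    (A : Fin N → Matrix (Fin n) (Fin n) ℝ) (v : Fin n → ℝ) (r : ℝ)
    (h : ∀ i, v ⬝ᵥ ((A i + L)ᵀ * P + P * (A i + L)).mulVec v ≤ r)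
    {M : Matrix (Fin n) (Fin n) ℝ} (hM : M ∈ convexHull ℝ (Set.range A)) :
    v ⬝ᵥ ((M + L)ᵀ * P + P * (M + L)).mulVec v ≤ r := by
  have hconv : Convex ℝ {M : Matrix (Fin n) (Fin n) ℝ |
      v ⬝ᵥ ((M + L)ᵀ * P + P * (M + L)).mulVec v ≤ r} := by
    intro X hX Y hY a b ha hb hab
    simp only [Set.mem_ofPred_eq] at hX hY ⊢
    have hXY : a • X + b • Y + L = a • (X + L) + b • (Y + L) := by
      rw [smul_add, smul_add, add_add_add_comm, ← add_smul, hab, one_smul]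
    rw [quad_lyapunov] at hX hY ⊢
    rw [hXY]
    simp only [add_mulVec _ _ v, smul_mulVec, mulVec_add, mulVec_smul, add_dotProduct,
      dotProduct_add, smul_dotProduct, dotProduct_smul, smul_eq_mul] at hX hY ⊢
    obtain rfl : b = 1 - a := by linarith
    nlinarith [mul_le_mul_of_nonneg_left hX ha, mul_le_mul_of_nonneg_left hY hb]
  exact convexHull_min (Set.range_subset_iff.2 h) hconv hM

/-- Stability conclusion of the paper's Theorem 3 / Corollary 2.1(b): a common
quadratic Lyapunov function satisfying the Lyapunov matrix inequality at all
polytope vertices guarantees robust asymptotic stability of the polytopic linear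
time-varying closed-loop system `ẋ = (A(t) + BK) x`. -/
theorem polytopic_ltv_asymptotic_stability {n m N : ℕ}
    (P : Matrix (Fin n) (Fin n) ℝ) (B : Matrix (Fin n) (Fin m) ℝ)
    (K : Matrix (Fin m) (Fin n) ℝ) (A : Fin N → Matrix (Fin n) (Fin n) ℝ)
    (hPsymm : Pᵀ = P)
    (hPpos : ∀ v : Fin n → ℝ, v ≠ 0 → 0 < v ⬝ᵥ P.mulVec v)
    (hA : ∀ i : Fin N, ∀ v : Fin n → ℝ, v ≠ 0 →
      v ⬝ᵥ ((A i + B * K)ᵀ * P + P * (A i + B * K)).mulVec v < 0)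
    (At : ℝ → Matrix (Fin n) (Fin n) ℝ)
    (hAt : ∀ t : ℝ, 0 ≤ t → At t ∈ convexHull ℝ (Set.range A))
    (x : ℝ → (Fin n → ℝ))
    (hx : ∀ t : ℝ, 0 ≤ t → HasDerivAt x ((At t + B * K).mulVec (x t)) t) :
    Filter.Tendsto x Filter.atTop (nhds 0) := by
  obtain ⟨c, hc, hcV⟩ := exists_pos_mul_le (fun v => ‖v‖ ^ 2) (fun v => v ⬝ᵥ P.mulVec v)
    (by fun_prop) (continuous_quad P) (fun r v => by simp [norm_smul, mul_pow]) (quad_smul P) hPpos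
  have hrate : ∀ i : Fin N, ∃ a > 0, ∀ v : Fin n → ℝ, a * (v ⬝ᵥ P.mulVec v) ≤
      -(v ⬝ᵥ ((A i + B * K)ᵀ * P + P * (A i + B * K)).mulVec v) := fun i =>
    exists_pos_mul_le _ (fun v => -(v ⬝ᵥ ((A i + B * K)ᵀ * P + P * (A i + B * K)).mulVec v))
      (continuous_quad P) (continuous_quad _).neg (quad_smul P)
      (fun r v => by simp only [quad_smul, mul_neg]) (fun v hv => neg_pos.2 (hA i v hv))
  choose a ha haV using hrate
  obtain ⟨α, hα, hαa⟩ : ∃ α > 0, ∀ i, α ≤ a i := by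
    have h : ∀ᶠ α in nhdsWithin (0 : ℝ) (Set.Ioi 0), ∀ i, α ≤ a i :=
      Filter.eventually_all.2 fun i => nhdsWithin_le_nhds (Iic_mem_nhds (ha i))
    have h0 : ∀ᶠ α in nhdsWithin (0 : ℝ) (Set.Ioi 0), α > 0 := self_mem_nhdsWithin
    exact (h0.and h).exists
  have hVnn : ∀ v : Fin n → ℝ, 0 ≤ v ⬝ᵥ P.mulVec v := fun v =>
    le_trans (by positivity) (hcV v)
  have hdecay : ∀ t, 0 ≤ t →
      x t ⬝ᵥ ((At t + B * K)ᵀ * P + P * (At t + B * K)).mulVec (x t)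
        ≤ -(α * (x t ⬝ᵥ P.mulVec (x t))) := fun t ht =>
    rate_of_mem_convexHull P (B * K) A (x t) _ (fun i => by
      nlinarith [haV i (x t), mul_le_mul_of_nonneg_right (hαa i) (hVnn (x t))]) (hAt t ht)
  have hder : ∀ t, 0 ≤ t → HasDerivAt (fun s => Real.exp (α * s) * (x s ⬝ᵥ P.mulVec (x s)))
      (Real.exp (α * t) * (α * (x t ⬝ᵥ P.mulVec (x t)) +
        x t ⬝ᵥ ((At t + B * K)ᵀ * P + P * (At t + B * K)).mulVec (x t))) t := by
    intro t ht
    have h1 : HasDerivAt (fun s : ℝ => Real.exp (α * s)) (Real.exp (α * t) * α) t := by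
      simpa using ((hasDerivAt_id t).const_mul α).exp
    refine (h1.mul (hasDerivAt_quad P (hx t ht))).congr_deriv ?_
    rw [quad_lyapunov]
    ring
  have hanti : AntitoneOn (fun s => Real.exp (α * s) * (x s ⬝ᵥ P.mulVec (x s))) (Set.Ici 0) := by
    refine antitoneOn_of_deriv_nonpos (convex_Ici 0)
      (fun t ht => (hder t ht).continuousAt.continuousWithinAt)
      (fun t ht => (hder t (interior_subset ht)).differentiableAt.differentiableWithinAt)
      fun t ht => ?_
    have ht0 : 0 ≤ t := interior_subset ht
    rw [(hder t ht0).deriv]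
    exact mul_nonpos_of_nonneg_of_nonpos (Real.exp_pos _).le (by linarith [hdecay t ht0])
  have hbound : ∀ t, 0 ≤ t →
      ‖x t‖ ^ 2 ≤ c⁻¹ * ((x 0 ⬝ᵥ P.mulVec (x 0)) * Real.exp (-(α * t))) := by
    intro t ht
    have h := hanti (Set.mem_Ici.2 le_rfl) (Set.mem_Ici.2 ht) ht
    simp only [mul_zero, Real.exp_zero, one_mul] at h
    rw [le_inv_mul_iff₀ hc, Real.exp_neg, ← div_eq_mul_inv, le_div_iff₀ (Real.exp_pos _)]
    nlinarith [mul_le_mul_of_nonneg_right (hcV (x t)) (Real.exp_pos (α * t)).le]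
  have hexp : Filter.Tendsto
      (fun t => c⁻¹ * ((x 0 ⬝ᵥ P.mulVec (x 0)) * Real.exp (-(α * t)))) Filter.atTop (nhds 0) := by
    have h := Real.tendsto_exp_neg_atTop_nhds_zero.comp (Filter.tendsto_id.const_mul_atTop hα)
    simpa using (h.const_mul (x 0 ⬝ᵥ P.mulVec (x 0))).const_mul c⁻¹
  have hsq : Filter.Tendsto (fun t => ‖x t‖ ^ 2) Filter.atTop (nhds 0) :=
    squeeze_zero' (Filter.Eventually.of_forall fun t => by positivity)
      ((Filter.eventually_ge_atTop 0).mono hbound) hexp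
  rw [tendsto_zero_iff_norm_tendsto_zero]
  simpa [Real.sqrt_sq] using hsq.sqrt
end

section
/- For a ∈ ℝ, let Ã(a) be the 3×3 real matrix with rows (−(25a+10), 25a+10, 0), (28−35a, 29a−1, 0), (0, 0, −(a+8)/3). Let P be a symmetric positive definite 3×3 real matrix, B a 3×m real matrix and K an m×3 real matrix such that both (Ã(0) + BK)ᵀ P + P (Ã(0) + BK) and (Ã(1) + BK)ᵀ P + P (Ã(1) + BK) are negative definite. Then for every a ∈ [0, 1], the matrix (Ã(a) + BK)ᵀ P + P (Ã(a) + BK) is negative definite. -/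
/-!
The Lyapunov expression `Xᵀ * P + P * X` is linear in `X`, and the closed-loop matrix
`Ã(a) + B * K` is affine in `a`, so its quadratic form at `v` is the convex combination, with
weights `1 - a` and `a`, of the two negative values taken at the vertices `a = 0` and `a = 1`.
-/

open Matrix

/-- Specialization of the paper's Remark 1 and Theorem 4 to the unified chaotic
system: checking the closed-loop Lyapunov matrix inequality at the two polytope
vertices `Ã(0)` and `Ã(1)` suffices for all `a ∈ [0,1]`. -/
theorem unified_chaotic_lyapunov_vertices {m : ℕ}
    (Atil : ℝ → Matrix (Fin 3) (Fin 3) ℝ)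
    (hAtil : ∀ a : ℝ, Atil a =
      !![-(25 * a + 10), 25 * a + 10, 0;
         28 - 35 * a, 29 * a - 1, 0;
         0, 0, -((a + 8) / 3)])
    (P : Matrix (Fin 3) (Fin 3) ℝ)
    (hPsymm : Pᵀ = P)
    (hPpos : ∀ v : Fin 3 → ℝ, v ≠ 0 → 0 < v ⬝ᵥ P.mulVec v)
    (B : Matrix (Fin 3) (Fin m) ℝ) (K : Matrix (Fin m) (Fin 3) ℝ)
    (h0 : ∀ v : Fin 3 → ℝ, v ≠ 0 →
      v ⬝ᵥ ((Atil 0 + B * K)ᵀ * P + P * (Atil 0 + B * K)).mulVec v < 0)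
    (h1 : ∀ v : Fin 3 → ℝ, v ≠ 0 →
      v ⬝ᵥ ((Atil 1 + B * K)ᵀ * P + P * (Atil 1 + B * K)).mulVec v < 0) :
    ∀ a ∈ Set.Icc (0 : ℝ) 1, ∀ v : Fin 3 → ℝ, v ≠ 0 →
      v ⬝ᵥ ((Atil a + B * K)ᵀ * P + P * (Atil a + B * K)).mulVec v < 0 := by
  rintro a ⟨ha0, ha1⟩ v hv
  have hA : Atil a = (1 - a) • Atil 0 + a • Atil 1 := by
    rw [hAtil a, hAtil 0, hAtil 1]
    ext i j
    fin_cases i <;> fin_cases j <;> simp <;> ring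
  -- The gain term is constant in `a`, so the closed-loop matrix is the same convex combination.
  have hC : Atil a + B * K = (1 - a) • (Atil 0 + B * K) + a • (Atil 1 + B * K) := by
    rw [hA]
    module
  have hL : (Atil a + B * K)ᵀ * P + P * (Atil a + B * K) =
      (1 - a) • ((Atil 0 + B * K)ᵀ * P + P * (Atil 0 + B * K)) +
        a • ((Atil 1 + B * K)ᵀ * P + P * (Atil 1 + B * K)) := by
    rw [hC]
    generalize Atil 0 + B * K = X
    generalize Atil 1 + B * K = Y
    simp only [transpose_add, transpose_smul, Matrix.add_mul, Matrix.mul_add,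
      Matrix.smul_mul, Matrix.mul_smul]
    module
  rw [hL, add_mulVec, smul_mulVec, smul_mulVec, dotProduct_add, dotProduct_smul,
    dotProduct_smul, smul_eq_mul, smul_eq_mul]
  -- The two weights `1 - a` and `a` are nonnegative and cannot both vanish.
  rcases ha0.eq_or_lt with rfl | ha
  · simpa using h0 v hv
  · exact add_neg_of_nonpos_of_neg
      (mul_nonpos_of_nonneg_of_nonpos (sub_nonneg.2 ha1) (h0 v hv).le)
      (mul_neg_of_pos_of_neg ha (h1 v hv))
end
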